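/- Let X be a separable Banach space, (Ω, F) a measurable space, and t₀ < T real numbers. Suppose ξ : Ω × [t₀, T] → X* is such that (i) for every t ∈ [t₀, T], the map ω ↦ ξ(ω, t) is F\B(T_{w*})-measurable, and (ii) for every ω ∈ Ω and every g ∈ X, the map t ↦ ⟨ξ(ω, t), g⟩ is continuous on [t₀, T]. Then the map (ω, t) ↦ ξ(ω, t) is jointly measurable, i.e., measurable from (Ω × [t₀, T], F ⊗ B([t₀, T])) to (X*, B(T_{w*})). -/

import Mathlib

open Filter Topology

theorem weakDual_isLindelof_aux (X : Type*) [NormedAddCommGroup X] [NormedSpace ℝ X]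
    [TopologicalSpace.SeparableSpace X] (U : Set (WeakDual ℝ X)) : IsLindelof U := by
  have hU : U = ⋃ n : ℕ, ((Subtype.val) '' ((Subtype.val) ⁻¹' U :
      Set (WeakDual.toStrongDual (𝕜 := ℝ) (E := X) ⁻¹' Metric.closedBall 0 (n : ℝ)))) := by
    ext x
    simp only [Set.mem_iUnion, Subtype.image_preimage_coe, Set.mem_inter_iff]
    constructor
    · intro hx
      obtain ⟨n, hn⟩ := exists_nat_ge ‖WeakDual.toStrongDual x‖
      exact ⟨n, by simpa using hn, hx⟩
    · rintro ⟨n, _, hx⟩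
      exact hx
  rw [hU]
  refine isLindelof_iUnion fun n => ?_
  have hK := WeakDual.isCompact_closedBall (𝕜 := ℝ) (E := X) 0 (n : ℝ)
  haveI := WeakDual.metrizable_of_isCompact ℝ X _ hK
  haveI := isCompact_iff_compactSpace.mp hK
  letI := TopologicalSpace.metrizableSpaceMetric
    (WeakDual.toStrongDual (𝕜 := ℝ) (E := X) ⁻¹' Metric.closedBall 0 (n : ℝ))
  exact (HereditarilyLindelofSpace.isLindelof _).image continuous_subtype_val

theorem weakDual_measurable_aux (X : Type*) [NormedAddCommGroup X] [NormedSpace ℝ X]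
    [TopologicalSpace.SeparableSpace X] (A : Type*) [MeasurableSpace A]
    (f : A → WeakDual ℝ X) (hf : ∀ g : X, Measurable fun a => f a g) :
    @Measurable A (WeakDual ℝ X) inferInstance (borel (WeakDual ℝ X)) f := by
  refine measurable_generateFrom fun U hU => ?_
  have key : ∀ x ∈ U, ∃ V : Set (WeakDual ℝ X), V ∈ 𝓝 x ∧ V ⊆ U ∧ MeasurableSet (f ⁻¹' V) := by
    intro x hx
    obtain ⟨W, hW, hWU⟩ := isOpen_induced_iff.mp hU
    subst hWU
    obtain ⟨I, u, h1, h2⟩ := isOpen_pi_iff.mp hW _ hx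
    refine ⟨⋂ g ∈ I, (fun y : WeakDual ℝ X => y g) ⁻¹' u g, ?_, ?_, ?_⟩
    · refine (Filter.biInter_finset_mem I).mpr fun g hg => ?_
      exact ((h1 g hg).1.preimage (WeakDual.eval_continuous g)).mem_nhds (h1 g hg).2
    · intro y hy
      refine h2 fun g hg => ?_
      exact Set.mem_iInter₂.mp hy g hg
    · rw [Set.preimage_iInter₂]
      exact Finset.measurableSet_biInter I fun g hg => hf g (h1 g hg).1.measurableSet
  choose! V hV1 hV2 hV3 using key
  obtain ⟨t, ht, htU, hc⟩ := (weakDual_isLindelof_aux X U).elim_nhds_subcover V hV1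
  have : U = ⋃ x ∈ t, V x :=
    Set.Subset.antisymm hc (Set.iUnion₂_subset fun x hx => hV2 x (htU x hx))
  rw [this, Set.preimage_iUnion₂]
  exact MeasurableSet.biUnion ht fun x hx => hV3 x (htU x hx)

/-- Let `X` be a separable Banach space, `(Ω, F)` a measurable space and `t₀ < T`.  If
`ξ : Ω × [t₀, T] → X*` is such that `ω ↦ ξ(ω, t)` is weak-* Borel measurable for each `t`, and
`t ↦ ⟨ξ(ω, t), g⟩` is continuous for every `ω` and every `g ∈ X`, then `(ω, t) ↦ ξ(ω, t)` is
jointly measurable from `F ⊗ B([t₀, T])` to the weak-* Borel σ-algebra of `X*`. -/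
theorem jointly_measurable_of_measurable_of_weakStar_continuous
    (X : Type*) [NormedAddCommGroup X] [NormedSpace ℝ X]
    [CompleteSpace X] [TopologicalSpace.SeparableSpace X]
    (Ω : Type*) [MeasurableSpace Ω]
    (t₀ T : ℝ) (hT : t₀ < T)
    (ξ : Ω → Set.Icc t₀ T → WeakDual ℝ X)
    (hmeas : ∀ t : Set.Icc t₀ T,
      @Measurable Ω (WeakDual ℝ X) inferInstance (borel (WeakDual ℝ X))
        (fun ω => ξ ω t))
    (hcont : ∀ (ω : Ω) (g : X),
      Continuous fun t : Set.Icc t₀ T => ξ ω t g) :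
    @Measurable (Ω × Set.Icc t₀ T) (WeakDual ℝ X) inferInstance (borel (WeakDual ℝ X))
      (fun p => ξ p.1 p.2) := by
  refine weakDual_measurable_aux X _ _ fun g => ?_
  have h := MeasureTheory.measurable_uncurry_of_continuous_of_measurable
    (u := fun (t : Set.Icc t₀ T) (ω : Ω) => ξ ω t g) (fun ω => hcont ω g) (fun t => by
      letI : MeasurableSpace (WeakDual ℝ X) := borel _
      haveI : BorelSpace (WeakDual ℝ X) := ⟨rfl⟩
      exact (WeakDual.eval_continuous g).measurable.comp (hmeas t))
  exact h.comp measurable_swap
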